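/- Let n, d, k be integers with d ≥ 3 and 1 ≤ k ≤ n. Then E[∫ f_{S_−(X)} dVol] ≥ (1/3)·d·2^{n−k}, where Vol is the normalized counting measure on [2^n]^d (so Vol([2^n]^d) = 1). -/

import Mathlib

open MeasureTheory Finset

noncomputable section

/-- Points of the grid `[2^n]^d` (coordinates taken 0-based). -/
abbrev GridPt (n d : ℕ) := Fin d → Fin (2^n)

/-- Normalized counting "volume" of a subset of the grid: `Vol(A) = 2^{-nd}|A|`. -/
def Vol (n d : ℕ) (A : Finset (GridPt n d)) : ℝ := (A.card : ℝ) / 2^(n*d)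

/-- The ℓ1 metric on the grid. -/
def gdist {n d : ℕ} (u v : GridPt n d) : ℝ := ∑ i, |((u i : ℕ) : ℝ) - ((v i : ℕ) : ℝ)|

/-- Indices of the dyadic cubes in `D_k`. -/
abbrev CubeIdx (d k : ℕ) := Fin d → Fin (2^k)

/-- The dyadic cube of side-cardinality `2^(n-k)` indexed by `j ∈ {0,…,2^k-1}^d`. -/
def cube (n d k : ℕ) (j : CubeIdx d k) : Finset (GridPt n d) :=
  Finset.univ.filter (fun x => ∀ i, (x i : ℕ) / 2^(n-k) = (j i : ℕ))

/-- `p = 2^{-4d}`. -/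
def pp (d : ℕ) : ℝ := ((2:ℝ)^(4*d))⁻¹

/-- The law of each `X_Q`: takes values `±1` with probability `p/2` each
and `0` with probability `1-p`. -/
def stepMeasure (d : ℕ) : Measure ℝ :=
  (Real.toNNReal (pp d / 2)) • Measure.dirac (1:ℝ)
  + (Real.toNNReal (pp d / 2)) • Measure.dirac (-1:ℝ)
  + (Real.toNNReal (1 - pp d)) • Measure.dirac (0:ℝ)

instance (d : ℕ) : IsFiniteMeasure (stepMeasure d) := by
  unfold stepMeasure; infer_instance

/-- The joint law of the i.i.d. family `{X_Q}_{Q ∈ D_k}`; a sample point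
`ω : CubeIdx d k → ℝ` records the values `X_Q = ω Q`. -/
def prodMeasure (d k : ℕ) : Measure (CubeIdx d k → ℝ) :=
  Measure.pi fun _ => stepMeasure d

/-- `μ_k(A) = ∑_{Q ∈ D_k} p⁻¹ 2^k X_Q Vol(A ∩ Q)`, as a function of the sample point `ω`. -/
def muMeas (n d k : ℕ) (A : Finset (GridPt n d)) (ω : CubeIdx d k → ℝ) : ℝ :=
  ∑ j : CubeIdx d k, (pp d)⁻¹ * 2^k * ω j * Vol n d (A ∩ cube n d k j)

/-- The function `f_S(z) = min{dist(z, ∪_{Q∈S} Q), d·2^n}`, with `f_∅ ≡ d·2^n`. -/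
def fS (n d k : ℕ) (S : Finset (CubeIdx d k)) (z : GridPt n d) : ℝ :=
  if h : (S.biUnion (cube n d k)).Nonempty
  then min ((S.biUnion (cube n d k)).inf' h (fun w => gdist z w)) ((d:ℝ) * 2^n)
  else (d:ℝ) * 2^n

/-- The random subset `S₋(X) = {Q ∈ D_k : X_Q = -1}`. -/
def Sminus (d k : ℕ) (ω : CubeIdx d k → ℝ) : Finset (CubeIdx d k) :=
  Finset.univ.filter (fun j => ω j = -1)

/-- `∫ f dVol`, where `Vol` is the normalized counting measure on the grid. -/
def intVol (n d : ℕ) (f : GridPt n d → ℝ) : ℝ := (∑ x, f x) / 2^(n*d)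

/-- `∫ f dμ_k`, as a function of the sample point `ω`. -/
def intMu (n d k : ℕ) (f : GridPt n d → ℝ) (ω : CubeIdx d k → ℝ) : ℝ :=
  ∑ x, f x * muMeas n d k {x} ω

/-!
The expectation is controlled by a union bound. Measure lengths in units of the side `2^(n-k)`: if
`T` whole cubes, summed over the coordinates, separate a point `z` from a cube `Q`, then
`dist(z, Q) ≥ 2^(n-k) T`. Since `d (1 - 2^(d-T)) ≤ T`, this gives
`f_S(z) ≥ d 2^(n-k) (1 - ∑_{Q ∈ S} 2^(d-T(z,Q)))`. The weight `2^(d-T(z,Q))` is a product over the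
coordinates, and each coordinate contributes at most `2 (2 + 1 + 2) = 10` to the sum over all `Q`:
a geometric series on either side of `z`, and the slab containing `z`. Taking expectations, the sum
becomes at most `10^d p / 2 = (5/8)^d / 2`.
-/

/-- The number of blocks lying strictly between the `a`-th and the `b`-th of a row of consecutive
blocks: the distance between the two blocks in units of the block length. It is `0` for `a = b`
thanks to truncated subtraction. -/
def blockGap (a b : ℕ) : ℕ := Nat.dist a b - 1

lemma blockGap_comm (a b : ℕ) : blockGap a b = blockGap b a := by
  rw [blockGap, blockGap, Nat.dist_comm]

lemma mul_blockGap_div_le_abs_sub (s x y : ℕ) :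
    (s : ℝ) * blockGap (x / s) (y / s) ≤ |(x : ℝ) - y| := by
  wlog hxy : x ≤ y generalizing x y
  · rw [blockGap_comm, abs_sub_comm]
    exact this y x (le_of_not_ge hxy)
  rcases s.eq_zero_or_pos with rfl | hs
  · simp
  have hx : x < s * (x / s) + s := Nat.lt_mul_div_succ x hs
  have hy : s * (y / s) ≤ y := Nat.mul_div_le y s
  have hgap : s * blockGap (x / s) (y / s) ≤ y - x := by
    rw [blockGap, Nat.dist_eq_sub_of_le (Nat.div_le_div_right hxy), Nat.mul_sub, Nat.mul_sub]
    omega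
  rw [abs_sub_comm, ← Nat.cast_sub hxy, Nat.abs_cast]
  exact_mod_cast hgap

lemma sum_half_pow_blockGap_le (a N : ℕ) :
    ∑ b ∈ range N, (1 / 2 : ℝ) ^ blockGap a b ≤ 5 := by
  have hleft : ∑ b ∈ range a, (1 / 2 : ℝ) ^ blockGap a b ≤ 2 := by
    rw [← sum_range_reflect]
    refine (sum_congr rfl fun i hi => ?_).trans_le (sum_geometric_two_le a)
    have hia : i < a := mem_range.1 hi
    have hgap : blockGap a (a - 1 - i) = i := by
      unfold blockGap Nat.dist
      omega
    rw [hgap]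
  have hright : ∑ i ∈ range N, (1 / 2 : ℝ) ^ blockGap a (a + 1 + i) ≤ 2 := by
    refine (sum_congr rfl fun i _ => ?_).trans_le (sum_geometric_two_le N)
    have hgap : blockGap a (a + 1 + i) = i := by
      unfold blockGap Nat.dist
      omega
    rw [hgap]
  have hself : (1 / 2 : ℝ) ^ blockGap a a = 1 := by simp [blockGap]
  calc ∑ b ∈ range N, (1 / 2 : ℝ) ^ blockGap a b
      ≤ ∑ b ∈ range (a + 1 + N), (1 / 2 : ℝ) ^ blockGap a b :=
        sum_le_sum_of_subset_of_nonneg (range_mono (by omega)) fun _ _ _ => by positivity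
    _ ≤ 5 := by
        rw [sum_range_add, sum_range_succ]
        linarith

/-- The `ℓ1` separation of `z` from the cube `Q_j`, in units of the side `2^(n-k)` and rounded down
in each coordinate to the number of whole dyadic intervals in between. -/
def cubeSep {n d k : ℕ} (z : GridPt n d) (j : CubeIdx d k) : ℕ :=
  ∑ i, blockGap ((z i : ℕ) / 2 ^ (n - k)) (j i)

/-- The quantity `2^(d-T)`, where `T` is the separation of `z` from the cube `Q_j`. It is at
least `1` for all cubes with `T ≤ d`, and serves as the union bound weight of `Q_j`. -/
def cubeWeight {n d k : ℕ} (z : GridPt n d) (j : CubeIdx d k) : ℝ :=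
  2 ^ d * (1 / 2) ^ cubeSep z j

lemma cubeWeight_nonneg {n d k : ℕ} (z : GridPt n d) (j : CubeIdx d k) : 0 ≤ cubeWeight z j := by
  unfold cubeWeight
  positivity

lemma mul_one_sub_two_pow_mul_half_pow_le (d T : ℕ) :
    (d : ℝ) * (1 - 2 ^ d * (1 / 2) ^ T) ≤ T := by
  rcases le_total d T with hdT | hTd
  · calc (d : ℝ) * (1 - 2 ^ d * (1 / 2) ^ T) ≤ d * 1 := by
          gcongr
          exact sub_le_self _ (by positivity)
      _ ≤ T := by rw [mul_one]; exact_mod_cast hdT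
  · have hweight : (1 : ℝ) ≤ 2 ^ d * (1 / 2) ^ T :=
      calc (1 : ℝ) = 2 ^ T * (1 / 2) ^ T := by rw [← mul_pow]; norm_num
        _ ≤ 2 ^ d * (1 / 2) ^ T := by gcongr; norm_num
    exact (mul_nonpos_of_nonneg_of_nonpos d.cast_nonneg (sub_nonpos.2 hweight)).trans T.cast_nonneg

lemma sum_cubeWeight_le {n d k : ℕ} (z : GridPt n d) :
    ∑ j : CubeIdx d k, cubeWeight z j ≤ 10 ^ d := by
  calc ∑ j : CubeIdx d k, cubeWeight z j
      = 2 ^ d * ∏ i, ∑ b ∈ range (2 ^ k), (1 / 2 : ℝ) ^ blockGap ((z i : ℕ) / 2 ^ (n - k)) b := by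
        simp only [cubeWeight, cubeSep, ← mul_sum, ← prod_pow_eq_pow_sum, sum_range,
          Fintype.prod_sum]
    _ ≤ 2 ^ d * ∏ _i : Fin d, 5 := by
        gcongr
        exact sum_half_pow_blockGap_le _ _
    _ = 10 ^ d := by
        rw [Fin.prod_const, ← mul_pow]
        norm_num

lemma two_pow_mul_cubeSep_le_gdist {n d k : ℕ} {j : CubeIdx d k} {w : GridPt n d}
    (hw : w ∈ cube n d k j) (z : GridPt n d) :
    (2 : ℝ) ^ (n - k) * cubeSep z j ≤ gdist z w := by
  have hwj : ∀ i, (w i : ℕ) / 2 ^ (n - k) = j i := (mem_filter.1 hw).2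
  rw [cubeSep, gdist, Nat.cast_sum, mul_sum]
  refine sum_le_sum fun i _ => ?_
  rw [← hwj i]
  exact_mod_cast mul_blockGap_div_le_abs_sub (2 ^ (n - k)) (z i) (w i)

lemma le_fS {n d k : ℕ} {S : Finset (CubeIdx d k)} {z : GridPt n d} {c : ℝ}
    (hcap : c ≤ d * 2 ^ n) (hdist : ∀ j ∈ S, ∀ w ∈ cube n d k j, c ≤ gdist z w) :
    c ≤ fS n d k S z := by
  unfold fS
  split_ifs with hne
  · refine le_min (le_inf' _ _ fun w hw => ?_) hcap
    obtain ⟨j, hj, hwj⟩ := mem_biUnion.1 hw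
    exact hdist j hj w hwj
  · exact hcap

lemma mul_one_sub_sum_cubeWeight_le_fS {n d k : ℕ} (S : Finset (CubeIdx d k)) (z : GridPt n d) :
    d * 2 ^ (n - k) * (1 - ∑ j ∈ S, cubeWeight z j) ≤ fS n d k S z := by
  have hnonneg : ∀ j ∈ S, 0 ≤ cubeWeight z j := fun j _ => cubeWeight_nonneg z j
  refine le_fS ?_ fun j hj w hw => ?_
  · calc d * 2 ^ (n - k) * (1 - ∑ j ∈ S, cubeWeight z j)
        ≤ d * 2 ^ (n - k) := mul_le_of_le_one_right (by positivity)
          (sub_le_self _ (sum_nonneg hnonneg))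
      _ ≤ d * 2 ^ n := by
          gcongr
          · exact one_le_two
          · exact n.sub_le k
  · calc d * 2 ^ (n - k) * (1 - ∑ j ∈ S, cubeWeight z j)
        ≤ d * 2 ^ (n - k) * (1 - cubeWeight z j) := by
          gcongr
          exact single_le_sum hnonneg hj
      _ = 2 ^ (n - k) * (d * (1 - 2 ^ d * (1 / 2) ^ cubeSep z j)) := by
          rw [cubeWeight]
          ring
      _ ≤ 2 ^ (n - k) * cubeSep z j := by
          gcongr
          exact mul_one_sub_two_pow_mul_half_pow_le d _
      _ ≤ gdist z w := two_pow_mul_cubeSep_le_gdist hw z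

lemma le_intVol {n d : ℕ} {f : GridPt n d → ℝ} {c : ℝ} (h : ∀ x, c ≤ f x) :
    c ≤ intVol n d f := by
  have hcard : (Fintype.card (GridPt n d) : ℝ) = 2 ^ (n * d) := by simp [pow_mul]
  rw [intVol, le_div_iff₀ (by positivity), ← hcard, mul_comm, ← nsmul_eq_mul]
  exact card_nsmul_le_sum _ _ _ fun x _ => h x

section RandomFinset

variable {Ω ι : Type*} [MeasurableSpace Ω] {P : Measure Ω} [IsFiniteMeasure P] {S : Ω → Finset ι}

lemma integrable_comp_finset [Finite ι] (hS : ∀ j, MeasurableSet {ω | j ∈ S ω})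
    (g : Finset ι → ℝ) : Integrable (fun ω => g (S ω)) P := by
  have hmeas : Measurable fun ω => (S ω : Set ι) :=
    measurable_set_iff.2 fun j => measurable_mem.2 (hS j)
  have hint : Integrable (fun A : Set ι => g A.toFinite.toFinset) (P.map fun ω => (S ω : Set ι)) :=
    .of_finite
  simpa [Function.comp_def] using hint.comp_measurable hmeas

lemma integral_sum_mem_finset [Fintype ι] (hS : ∀ j, MeasurableSet {ω | j ∈ S ω})
    (c : ι → ℝ) : ∫ ω, ∑ j ∈ S ω, c j ∂P = ∑ j, P.real {ω | j ∈ S ω} * c j := by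
  classical
  calc ∫ ω, ∑ j ∈ S ω, c j ∂P
      = ∫ ω, ∑ j, {ω | j ∈ S ω}.indicator (fun _ => c j) ω ∂P := by
        simp [Set.indicator_apply]
    _ = ∑ j, P.real {ω | j ∈ S ω} * c j := by
        rw [integral_finsetSum _ fun j _ => (integrable_const _).indicator (hS j)]
        simp only [integral_indicator_const _ (hS _), smul_eq_mul]

end RandomFinset

section RandomCubes

variable {Ω : Type*} [MeasurableSpace Ω] {P : Measure Ω} {n d k : ℕ}

lemma integral_intVol {F : Ω → GridPt n d → ℝ} (hF : ∀ x, Integrable (fun ω => F ω x) P) :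
    ∫ ω, intVol n d (F ω) ∂P = intVol n d fun x => ∫ ω, F ω x ∂P := by
  unfold intVol
  rw [integral_div, integral_finsetSum _ fun x _ => hF x]

variable [IsProbabilityMeasure P] {S : Ω → Finset (CubeIdx d k)} {q : ℝ}

lemma mul_one_sub_le_integral_fS (hS : ∀ j, MeasurableSet {ω | j ∈ S ω})
    (hq : ∀ j, P.real {ω | j ∈ S ω} ≤ q) (z : GridPt n d) :
    d * 2 ^ (n - k) * (1 - q * 10 ^ d) ≤ ∫ ω, fS n d k (S ω) z ∂P := by
  have hq_nonneg : 0 ≤ q := measureReal_nonneg.trans (hq fun _ => 0)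
  have hsum : ∑ j, P.real {ω | j ∈ S ω} * cubeWeight z j ≤ q * 10 ^ d :=
    calc ∑ j, P.real {ω | j ∈ S ω} * cubeWeight z j ≤ ∑ j, q * cubeWeight z j :=
          sum_le_sum fun j _ => mul_le_mul_of_nonneg_right (hq j) (cubeWeight_nonneg z j)
      _ ≤ q * 10 ^ d := by
          rw [← mul_sum]
          gcongr
          exact sum_cubeWeight_le z
  calc d * 2 ^ (n - k) * (1 - q * 10 ^ d)
      ≤ d * 2 ^ (n - k) * (1 - ∑ j, P.real {ω | j ∈ S ω} * cubeWeight z j) := by gcongr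
    _ = ∫ ω, d * 2 ^ (n - k) * (1 - ∑ j ∈ S ω, cubeWeight z j) ∂P := by
        rw [integral_const_mul, integral_sub (integrable_const _)
          (integrable_comp_finset hS fun A => ∑ j ∈ A, cubeWeight z j),
          integral_sum_mem_finset hS, integral_const, probReal_univ, one_smul]
    _ ≤ ∫ ω, fS n d k (S ω) z ∂P :=
        integral_mono
          (integrable_comp_finset hS fun A => d * 2 ^ (n - k) * (1 - ∑ j ∈ A, cubeWeight z j))
          (integrable_comp_finset hS fun A => fS n d k A z)
          fun ω => mul_one_sub_sum_cubeWeight_le_fS (S ω) z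

theorem mul_one_sub_le_integral_intVol_fS (hS : ∀ j, MeasurableSet {ω | j ∈ S ω})
    (hq : ∀ j, P.real {ω | j ∈ S ω} ≤ q) :
    d * 2 ^ (n - k) * (1 - q * 10 ^ d) ≤ ∫ ω, intVol n d (fS n d k (S ω)) ∂P := by
  rw [integral_intVol fun z => integrable_comp_finset hS fun A => fS n d k A z]
  exact le_intVol fun z => mul_one_sub_le_integral_fS hS hq z

end RandomCubes

lemma pp_pos (d : ℕ) : 0 < pp d := by
  unfold pp
  positivity

lemma pp_le_one (d : ℕ) : pp d ≤ 1 :=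
  inv_le_one_of_one_le₀ (one_le_pow₀ one_le_two)

lemma pp_mul_ten_pow (d : ℕ) : pp d * 10 ^ d = (5 / 8) ^ d := by
  rw [pp, pow_mul, ← inv_pow, ← mul_pow]
  norm_num

instance (d : ℕ) : IsProbabilityMeasure (stepMeasure d) where
  measure_univ := by
    have hpos := pp_pos d
    have hone := pp_le_one d
    have hsum : (pp d / 2).toNNReal + (pp d / 2).toNNReal + (1 - pp d).toNNReal = 1 := by
      rw [← Real.toNNReal_add (by linarith) (by linarith), add_halves,
        ← Real.toNNReal_add hpos.le (by linarith), add_sub_cancel, Real.toNNReal_one]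
    simp only [stepMeasure, Measure.add_apply, Measure.smul_apply, measure_univ,
      ENNReal.smul_def, smul_eq_mul, mul_one]
    exact_mod_cast hsum

lemma stepMeasure_real_singleton_neg_one (d : ℕ) : (stepMeasure d).real {-1} = pp d / 2 := by
  have hpos := pp_pos d
  have hmass : stepMeasure d {-1} = (pp d / 2).toNNReal := by
    have hone : (1 : ℝ) ∉ ({-1} : Set ℝ) := by norm_num
    have hzero : (0 : ℝ) ∉ ({-1} : Set ℝ) := by norm_num
    simp [stepMeasure, hone, hzero]
  rw [Measure.real, hmass, ENNReal.coe_toReal, Real.coe_toNNReal _ (by linarith)]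

instance (d k : ℕ) : IsProbabilityMeasure (prodMeasure d k) := by
  unfold prodMeasure
  infer_instance

lemma setOf_mem_Sminus {d k : ℕ} (j : CubeIdx d k) :
    {ω : CubeIdx d k → ℝ | j ∈ Sminus d k ω} = Function.eval j ⁻¹' ({-1} : Set ℝ) := by
  ext ω
  simp [Sminus]

lemma measurableSet_mem_Sminus {d k : ℕ} (j : CubeIdx d k) :
    MeasurableSet {ω | j ∈ Sminus d k ω} := by
  rw [setOf_mem_Sminus]
  exact measurable_pi_apply j (measurableSet_singleton _)

lemma prodMeasure_real_mem_Sminus {d k : ℕ} (j : CubeIdx d k) :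
    (prodMeasure d k).real {ω | j ∈ Sminus d k ω} = pp d / 2 := by
  rw [setOf_mem_Sminus, prodMeasure, (measurePreserving_eval _ j).measureReal_preimage
    (measurableSet_singleton _).nullMeasurableSet, stepMeasure_real_singleton_neg_one]

theorem expected_intVol_ge_general (n d k : ℕ) (_hkn : k ≤ n) :
    ∫ ω, intVol n d (fS n d k (Sminus d k ω)) ∂(prodMeasure d k)
      ≥ (1 - (5 / 8) ^ d / 2) * d * 2 ^ (n - k) := by
  calc (1 - (5 / 8) ^ d / 2) * d * 2 ^ (n - k)
      = d * 2 ^ (n - k) * (1 - pp d / 2 * 10 ^ d) := by rw [← pp_mul_ten_pow]; ring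
    _ ≤ ∫ ω, intVol n d (fS n d k (Sminus d k ω)) ∂(prodMeasure d k) :=
        mul_one_sub_le_integral_intVol_fS measurableSet_mem_Sminus
          fun j => (prodMeasure_real_mem_Sminus j).le

/-- `E[∫ f_{S₋(X)} dVol] ≥ (1/3)·d·2^{n-k}`. -/
theorem expected_intVol_ge (n d k : ℕ) (hd : 3 ≤ d) (hk : 1 ≤ k) (hkn : k ≤ n) :
    ∫ ω, intVol n d (fS n d k (Sminus d k ω)) ∂(prodMeasure d k)
      ≥ (1/3) * (d:ℝ) * 2^(n-k) := by
  have hconst : (1 / 3 : ℝ) ≤ 1 - (5 / 8) ^ d / 2 := by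
    linarith [pow_le_one₀ (n := d) (by norm_num : (0 : ℝ) ≤ 5 / 8) (by norm_num)]
  exact ge_trans (expected_intVol_ge_general n d k hkn) (by gcongr)
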